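/- Let f ⊣ g : A → B and f' ⊣ g' : A' → B' be adjoint equivalences in a bicategory, let h : A → A' and k : B → B' be 1-cells, and let σ : k ∘ f ⟶ f' ∘ h and τ : h ∘ g ⟶ g' ∘ k be mates with respect to these adjoint equivalences. Then σ is invertible if and only if τ is invertible. -/

import Mathlib

/-!
STATEMENT 15: If `σ` and `τ` are mates with respect to adjoint *equivalences* `f ⊣ g` and
`f' ⊣ g'` (i.e. adjunctions with invertible unit and counit), then `σ` is invertible if and
only if `τ` is invertible.

Conventions: `≫` is diagrammatic; following the paper's pasting diagrams,
`σ : h ≫ f' ⟶ f ≫ k` and `τ : g ≫ h ⟶ k ≫ g'`.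
-/

/-!
Taking mates is a bijection (`Bicategory.mateEquiv`), and both it and its inverse are built from
the given 2-cell by whiskering and composing with structural isomorphisms and with units and
counits. The right mate uses the unit of `f' ⊣ g'` and the counit of `f ⊣ g`; its inverse uses the
unit of `f ⊣ g` and the counit of `f' ⊣ g'`. When all four of these are invertible, both
directions therefore preserve invertibility.
-/

open CategoryTheory Category Bicategory
open scoped Bicategory

universe w v u

namespace Thesis

variable {B : Type u} [Bicategory.{w, v} B]

/-- The right mate of `σ`, obtained by pasting `σ` with the unit of `f' ⊣ g'` and the counit
of `f ⊣ g`. -/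
def rightMate {a b a' b' : B} {f : a ⟶ b} {g : b ⟶ a} {f' : a' ⟶ b'} {g' : b' ⟶ a'}
    (adj : f ⊣ g) (adj' : f' ⊣ g') (h : a ⟶ a') (k : b ⟶ b')
    (σ : h ≫ f' ⟶ f ≫ k) : g ≫ h ⟶ k ≫ g' :=
  𝟙 (g ≫ h) ⊗≫ (g ≫ h) ◁ adj'.unit ⊗≫ g ◁ σ ▷ g' ⊗≫ adj.counit ▷ (k ≫ g') ⊗≫ 𝟙 (k ≫ g')

lemma rightMate_eq_mateEquiv {a b a' b' : B}
    {f : a ⟶ b} {g : b ⟶ a} {f' : a' ⟶ b'} {g' : b' ⟶ a'}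
    (adj : f ⊣ g) (adj' : f' ⊣ g') (h : a ⟶ a') (k : b ⟶ b')
    (σ : h ≫ f' ⟶ f ≫ k) :
    rightMate adj adj' h k σ = Bicategory.mateEquiv adj adj' σ := by
  rw [rightMate, Bicategory.mateEquiv_apply']
  bicategory

theorem mate_isIso_iff_of_adjoint_equivalences {a b a' b' : B}
    {f : a ⟶ b} {g : b ⟶ a} {f' : a' ⟶ b'} {g' : b' ⟶ a'}
    (adj : f ⊣ g) (adj' : f' ⊣ g')
    (hu : IsIso adj.unit) (hc : IsIso adj.counit)
    (hu' : IsIso adj'.unit) (hc' : IsIso adj'.counit)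
    (h : a ⟶ a') (k : b ⟶ b')
    (σ : h ≫ f' ⟶ f ≫ k) (τ : g ≫ h ⟶ k ≫ g')
    (hmate : τ = rightMate adj adj' h k σ) :
    IsIso σ ↔ IsIso τ := by
  subst hmate
  rw [rightMate_eq_mateEquiv]
  constructor
  · intro hσ
    rw [Bicategory.mateEquiv_apply']
    dsimp only [bicategoricalComp]
    infer_instance
  · intro hτ
    rw [← (Bicategory.mateEquiv adj adj').symm_apply_apply σ, Bicategory.mateEquiv_symm_apply']
    dsimp only [bicategoricalComp]
    infer_instance

end Thesis
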